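/- arXiv:2311.10262 — 2 statements merged into one kernel-verified Lean document; each statement's English description precedes it below -/
import Mathlib

section
/- There exists C > 0 such that for every word w with letters in {1,2,3} whose last two letters are different, the 2-dimensional Hausdorff measure (area) of the triangle conv{x,y,z} ⊂ ℝ³, where x = A_w e_1/ω(A_w e_1), y = A_w e_2/ω(A_w e_2), z = A_w e_3/ω(A_w e_3) and ω(v) = v1+v2+v3, satisfies Area(conv{x,y,z}) ≤ C · σ1(A_w)^{−3}. -/
/-!
A matrix whose columns have coordinate sum `1` maps the affine hyperplane spanned by the standard
simplex `Δ` to itself and induces the identity on the quotient by its direction, so it multiplies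
the Hausdorff measure of that hyperplane by its determinant. Normalizing the columns of `A_w` by
their sums `t₁, t₂, t₃`, the triangle therefore has area exactly `Area Δ / (t₁ t₂ t₃)`.

It remains to see that each `tⱼ` is comparable to `σ₁(A_w)`. As `A_w ≥ 0`, `σ₁(A_w) ≤ t₁ + t₂ + t₃`.
Right multiplication by a generator preserves the triangle inequalities between the column sums,
and if these hold for the column sums `t` of `A_u`, then for `a ≠ b` all column sums of
`A_u A_a A_b` lie between `t_a + t_b` and `3 (t_a + t_b)`.
-/

open Matrix MeasureTheory

noncomputable section

abbrev M3 := Matrix (Fin 3) (Fin 3) ℝ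
abbrev E3 := EuclideanSpace ℝ (Fin 3)

/-- The Rauzy generators. -/
def A : Fin 3 → M3
  | 0 => !![1,1,1; 0,1,0; 0,0,1]
  | 1 => !![1,0,0; 1,1,1; 0,0,1]
  | 2 => !![1,0,0; 0,1,0; 1,1,1]

/-- Product of the matrices along a word. -/
def Aw (w : List (Fin 3)) : M3 := (w.map A).prod

/-- Euclidean norm of a vector in `ℝ³`. -/
def enorm3 (v : Fin 3 → ℝ) : ℝ := Real.sqrt (v 0 ^ 2 + v 1 ^ 2 + v 2 ^ 2)

/-- Largest singular value = `ℓ²` operator norm. -/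
def sval1 (g : M3) : ℝ := ‖(Matrix.toEuclideanLin g).toContinuousLinearMap‖

/-- Smallest singular value (for invertible `g`): `σ₃(g) = σ₁(g⁻¹)⁻¹`. -/
def sval3 (g : M3) : ℝ := (sval1 g⁻¹)⁻¹

/-- Middle singular value (for invertible `g`): `σ₂ = |det g|·σ₁(g⁻¹)/σ₁(g)`. -/
def sval2 (g : M3) : ℝ := |g.det| * sval1 g⁻¹ / sval1 g

def basis3 (i : Fin 3) : Fin 3 → ℝ := Pi.single i 1

def omega3 (v : Fin 3 → ℝ) : ℝ := v 0 + v 1 + v 2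

def ofE : E3 → (Fin 3 → ℝ) := WithLp.equiv 2 (Fin 3 → ℝ)
def toE : (Fin 3 → ℝ) → E3 := (WithLp.equiv 2 (Fin 3 → ℝ)).symm

/-- The standard 2-simplex in `ℝ³` (with the Euclidean metric). -/
def simplex : Set E3 := {x | (∀ i, 0 ≤ ofE x i) ∧ omega3 (ofE x) = 1}

/-- The projective action of the word `w` on the simplex. -/
def fmap (w : List (Fin 3)) (x : E3) : E3 :=
  toE ((omega3 ((Aw w) *ᵥ ofE x))⁻¹ • ((Aw w) *ᵥ ofE x))

/-- The Rauzy gasket. -/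
def gasket : Set E3 :=
  ⋂ n : ℕ, ⋃ w ∈ {w : List (Fin 3) | w.length = n + 1}, fmap w '' simplex

/-- Falconer's singular value function. -/
def phi (s : ℝ) (g : M3) : ℝ :=
  if s ≤ 1 then (sval2 g / sval1 g) ^ s
  else (sval2 g / sval1 g) * (sval3 g / sval1 g) ^ (s - 1)

/-- The affinity exponent of the Rauzy semigroup. -/
def sA : ℝ :=
  sSup {s : ℝ | s ∈ Set.Ioc (0:ℝ) 2 ∧
    ¬ Summable fun w : {w : List (Fin 3) // w ≠ []} => phi s (Aw w.1)}

/-- A word has its last `k` letters not all the same. -/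
def LastNotAllSame (w : List (Fin 3)) (k : ℕ) : Prop :=
  k ≤ w.length ∧ ¬ ∃ c, ∀ x ∈ w.drop (w.length - k), x = c

/-- A word's last two letters are different. -/
def LastTwoDiff (w : List (Fin 3)) : Prop :=
  ∃ u a b, w = u ++ [a, b] ∧ a ≠ b

/-- The Cartan projection `κ(g) = (log σ₁, log σ₂, log σ₃)`. -/
def kappa (g : M3) : Fin 3 → ℝ :=
  ![Real.log (sval1 g), Real.log (sval2 g), Real.log (sval3 g)]

/-- The linear functional `ψ_s` on the Cartan algebra. -/
def psi (s : ℝ) (lam : Fin 3 → ℝ) : ℝ := (lam 0 - lam 1) + (s - 1) * (lam 0 - lam 2)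

end

open scoped ENNReal

section AffineSlice

variable {E : Type*} [NormedAddCommGroup E] [NormedSpace ℝ E] [MeasurableSpace E] [BorelSpace E]
  {V : Submodule ℝ E} {a : E} {s : Set E}

lemma hausdorffMeasure_preimage_const_add {d : ℝ} (hd : 0 ≤ d) (hs : ∀ x ∈ s, x - a ∈ V) :
    μH[d] ((fun v : V ↦ a + (v : E)) ⁻¹' s) = μH[d] s := by
  have hisom : Isometry fun v : V ↦ a + (v : E) := (isometry_add_left a).comp isometry_subtype_coe
  have hrange : s ⊆ Set.range fun v : V ↦ a + (v : E) :=
    fun x hx ↦ ⟨⟨x - a, hs x hx⟩, add_sub_cancel a x⟩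
  rw [hisom.hausdorffMeasure_preimage (.inl hd), Set.inter_eq_self_of_subset_left hrange]

lemma hausdorffMeasure_lt_top_of_isBounded [FiniteDimensional ℝ V] (hb : Bornology.IsBounded s)
    (hs : ∀ x ∈ s, x - a ∈ V) : μH[Module.finrank ℝ V] s < ∞ := by
  have hanti : AntilipschitzWith 1 fun v : V ↦ a + (v : E) :=
    ((isometry_add_left a).comp isometry_subtype_coe).antilipschitz
  rw [← hausdorffMeasure_preimage_const_add (Nat.cast_nonneg _) hs]
  exact (hanti.isBounded_preimage hb).measure_lt_top

end AffineSlice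

lemma le_comap_of_sub_mem {R E : Type*} [Ring R] [AddCommGroup E] [Module R E]
    {V : Submodule R E} {f : E →ₗ[R] E} (hf : ∀ x, f x - x ∈ V) : V ≤ V.comap f :=
  fun x hx ↦ (V.sub_mem_iff_left hx).1 (hf x)

lemma det_restrict_of_sub_mem {R E : Type*} [CommRing R] [AddCommGroup E] [Module R E]
    [Module.Finite R E] {V : Submodule R E} [Module.Free R V] [Module.Finite R V]
    [Module.Free R (E ⧸ V)] {f : E →ₗ[R] E} (hf : ∀ x, f x - x ∈ V) :
    (f.restrict (le_comap_of_sub_mem hf)).det = f.det := by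
  have hquot : V.mapQ V f (le_comap_of_sub_mem hf) = LinearMap.id := by
    ext x
    exact (Submodule.Quotient.eq V).2 (hf x)
  rw [LinearMap.det_eq_det_mul_det V f (le_comap_of_sub_mem hf), hquot, LinearMap.det_id, mul_one]

lemma hausdorffMeasure_image_of_sub_mem {E : Type*} [NormedAddCommGroup E] [NormedSpace ℝ E]
    [FiniteDimensional ℝ E] [MeasurableSpace E] [BorelSpace E] {V : Submodule ℝ E} {a : E}
    {s : Set E} {f : E →ₗ[ℝ] E} (hf : ∀ x, f x - x ∈ V) (hs : ∀ x ∈ s, x - a ∈ V) :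
    μH[Module.finrank ℝ V] (f '' s) =
      ENNReal.ofReal |f.det| * μH[Module.finrank ℝ V] s := by
  have hV := le_comap_of_sub_mem hf
  have himage : ∀ y ∈ f '' s, y - f a ∈ V := by
    rintro _ ⟨x, hx, rfl⟩
    simpa using hV (hs x hx)
  have hslice : (fun v : V ↦ f a + (v : E)) ⁻¹' (f '' s) =
      f.restrict hV '' ((fun v : V ↦ a + (v : E)) ⁻¹' s) := by
    ext v
    constructor
    · rintro ⟨x, hx, hxv⟩
      refine ⟨⟨x - a, hs x hx⟩, by simpa using hx, Subtype.ext ?_⟩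
      simpa [sub_eq_iff_eq_add'] using hxv
    · rintro ⟨u, hu, rfl⟩
      exact ⟨a + u, hu, map_add f a u⟩
  have hd : (0 : ℝ) ≤ Module.finrank ℝ V := Nat.cast_nonneg _
  rw [← hausdorffMeasure_preimage_const_add hd himage, hslice, Measure.addHaar_image_linearMap,
    det_restrict_of_sub_mem hf, hausdorffMeasure_preimage_const_add hd hs]

section Columns

variable (ι : Type*) [Fintype ι]

/-- The hyperplane of vectors with coordinate sum zero, the direction of the affine hyperplane
spanned by the standard simplex. -/
noncomputable def sumZeroSubspace : Submodule ℝ (EuclideanSpace ℝ ι) :=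
  LinearMap.ker (∑ i, EuclideanSpace.projₗ i)

/-- The standard simplex, as a subset of Euclidean space (Mathlib's `stdSimplex` lives in the
function space `ι → ℝ`, which carries the sup norm). -/
def euclideanStdSimplex [DecidableEq ι] : Set (EuclideanSpace ℝ ι) :=
  convexHull ℝ (Set.range fun i ↦ EuclideanSpace.single i (1 : ℝ))

variable {ι}

lemma mem_sumZeroSubspace {x : EuclideanSpace ℝ ι} : x ∈ sumZeroSubspace ι ↔ ∑ i, x i = 0 := by
  simp [sumZeroSubspace]

variable (ι) in
lemma finrank_sumZeroSubspace_add_one [Nonempty ι] :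
    Module.finrank ℝ (sumZeroSubspace ι) + 1 = Fintype.card ι := by
  classical
  have hne : (∑ i, EuclideanSpace.projₗ i : Module.Dual ℝ (EuclideanSpace ℝ ι)) ≠ 0 := by
    intro h
    obtain ⟨i⟩ := ‹Nonempty ι›
    simpa using congr($h (EuclideanSpace.single i 1))
  rw [sumZeroSubspace, Module.Dual.finrank_ker_add_one_of_ne_zero hne, finrank_euclideanSpace]

variable [DecidableEq ι]

lemma sum_eq_one_of_mem_euclideanStdSimplex {x : EuclideanSpace ℝ ι}
    (hx : x ∈ euclideanStdSimplex ι) : ∑ i, x i = 1 := by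
  have hconvex : Convex ℝ {x : EuclideanSpace ℝ ι | ∑ i, x i = 1} :=
    convex_hyperplane ⟨by simp [Finset.sum_add_distrib], by simp [Finset.mul_sum]⟩ 1
  refine convexHull_min ?_ hconvex hx
  rintro _ ⟨i, rfl⟩
  simp

lemma sub_single_mem_sumZeroSubspace (i : ι) {x : EuclideanSpace ℝ ι}
    (hx : x ∈ euclideanStdSimplex ι) : x - EuclideanSpace.single i 1 ∈ sumZeroSubspace ι := by
  simp [mem_sumZeroSubspace, sum_eq_one_of_mem_euclideanStdSimplex hx]

lemma hausdorffMeasure_euclideanStdSimplex_lt_top [Nonempty ι] :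
    μH[Module.finrank ℝ (sumZeroSubspace ι)] (euclideanStdSimplex ι) < ∞ :=
  hausdorffMeasure_lt_top_of_isBounded
    (isBounded_convexHull.2 (Set.finite_range _).isBounded)
    fun _ hx ↦ sub_single_mem_sumZeroSubspace (Classical.arbitrary ι) hx

lemma toEuclideanLin_sub_mem_sumZeroSubspace {N : Matrix ι ι ℝ} (hN : 1 ᵥ* N = 1)
    (x : EuclideanSpace ℝ ι) : toEuclideanLin N x - x ∈ sumZeroSubspace ι := by
  have hsum : ∑ i, (N *ᵥ x.ofLp) i = ∑ i, x i := by
    rw [← one_dotProduct, dotProduct_mulVec, hN, one_dotProduct]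
  simp [mem_sumZeroSubspace, hsum]

lemma toEuclideanLin_image_euclideanStdSimplex (N : Matrix ι ι ℝ) :
    toEuclideanLin N '' euclideanStdSimplex ι =
      convexHull ℝ (Set.range fun j ↦ WithLp.toLp 2 (N.col j)) := by
  rw [euclideanStdSimplex, LinearMap.image_convexHull, ← Set.range_comp]
  congr! 2
  ext j : 1
  simp [toLpLin_apply]

lemma hausdorffMeasure_convexHull_cols [Nonempty ι] {N : Matrix ι ι ℝ} (hN : 1 ᵥ* N = 1) :
    μH[Module.finrank ℝ (sumZeroSubspace ι)]
        (convexHull ℝ (Set.range fun j ↦ WithLp.toLp 2 (N.col j))) =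
      ENNReal.ofReal |N.det| *
        μH[Module.finrank ℝ (sumZeroSubspace ι)] (euclideanStdSimplex ι) := by
  rw [← toEuclideanLin_image_euclideanStdSimplex,
    hausdorffMeasure_image_of_sub_mem (toEuclideanLin_sub_mem_sumZeroSubspace hN)
      fun _ hx ↦ sub_single_mem_sumZeroSubspace (Classical.arbitrary ι) hx]
  simp

lemma hausdorffMeasure_convexHull_normalized_cols [Nonempty ι] {M : Matrix ι ι ℝ}
    (hM : ∀ j, (1 ᵥ* M) j ≠ 0) :
    μH[Module.finrank ℝ (sumZeroSubspace ι)]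
        (convexHull ℝ (Set.range fun j ↦ WithLp.toLp 2 (((1 ᵥ* M) j)⁻¹ • M.col j))) =
      ENNReal.ofReal |M.det * ∏ j, ((1 ᵥ* M) j)⁻¹| *
        μH[Module.finrank ℝ (sumZeroSubspace ι)] (euclideanStdSimplex ι) := by
  set N := M * diagonal fun j ↦ ((1 ᵥ* M) j)⁻¹
  have hN : 1 ᵥ* N = 1 := by
    ext j
    simp [N, ← vecMul_vecMul, vecMul_diagonal, hM j]
  have hcol (j : ι) : ((1 ᵥ* M) j)⁻¹ • M.col j = N.col j := by
    ext i
    simp [N, mul_diagonal, mul_comm]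
  simp_rw [hcol]
  rw [hausdorffMeasure_convexHull_cols hN, det_mul, det_diagonal]

end Columns

section OperatorNorm

variable {m n 𝕜 : Type*} [Fintype m] [Fintype n] [RCLike 𝕜]

lemma norm_le_sum_norm_apply (x : EuclideanSpace 𝕜 m) : ‖x‖ ≤ ∑ i, ‖x i‖ := by
  classical
  calc ‖x‖ = ‖∑ i, EuclideanSpace.single i (x i)‖ := by
        congr 1
        ext i
        simp [Pi.single_apply]
    _ ≤ ∑ i, ‖x i‖ := (norm_sum_le _ _).trans_eq (by simp)

lemma opNorm_toEuclideanLin_le_sum_norm [DecidableEq n] (M : Matrix m n 𝕜) :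
    ‖(toEuclideanLin M).toContinuousLinearMap‖ ≤ ∑ i, ∑ j, ‖M i j‖ := by
  refine ContinuousLinearMap.opNorm_le_bound _ (by positivity) fun x ↦ ?_
  calc ‖toEuclideanLin M x‖ ≤ ∑ i, ‖∑ j, M i j * x j‖ := norm_le_sum_norm_apply _
    _ ≤ ∑ i, ∑ j, ‖M i j‖ * ‖x‖ := by
        gcongr with i
        refine norm_sum_le_of_le _ fun j _ ↦ ?_
        rw [norm_mul]
        gcongr
        exact PiLp.norm_apply_le x j
    _ = (∑ i, ∑ j, ‖M i j‖) * ‖x‖ := by simp only [Finset.sum_mul]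

end OperatorNorm

lemma sval1_le_sum_vecMul {M : M3} (hM : ∀ i j, 0 ≤ M i j) : sval1 M ≤ ∑ j, (1 ᵥ* M) j := by
  refine (opNorm_toEuclideanLin_le_sum_norm M).trans_eq ?_
  rw [Finset.sum_comm]
  simp [vecMul, dotProduct, abs_of_nonneg (hM _ _)]

lemma sval1_pos {M : M3} (hM : M ≠ 0) : 0 < sval1 M := by
  simpa [sval1] using hM

lemma vecMul_A_apply (t : Fin 3 → ℝ) (a j : Fin 3) :
    (t ᵥ* A a) j = if j = a then t a else t a + t j := by
  fin_cases a <;> fin_cases j <;> simp [A, vecMul, dotProduct, Fin.sum_univ_three] <;> ring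

lemma A_nonneg (a i j : Fin 3) : 0 ≤ A a i j := by
  fin_cases a <;> fin_cases i <;> fin_cases j <;> simp [A]

lemma det_A (a : Fin 3) : (A a).det = 1 := by
  fin_cases a <;> simp [A, det_fin_three]

lemma Aw_nonneg (w : List (Fin 3)) (i j : Fin 3) : 0 ≤ Aw w i j := by
  induction w generalizing i with
  | nil => by_cases h : i = j <;> simp [Aw, h]
  | cons a w ih =>
    simpa [Aw, mul_apply] using Finset.sum_nonneg fun k _ ↦ mul_nonneg (A_nonneg a i k) (ih k)

lemma det_Aw (w : List (Fin 3)) : (Aw w).det = 1 := by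
  induction w with
  | nil => simp [Aw]
  | cons a w ih => simpa [Aw, det_A] using ih

/-- The triangle inequalities between the entries of `t`. The cases `i = j` say that the entries
are nonnegative. -/
def IsTriangular (t : Fin 3 → ℝ) : Prop :=
  ∀ i j k, j ≠ k → t i ≤ t j + t k

namespace IsTriangular

variable {t : Fin 3 → ℝ}

lemma nonneg (ht : IsTriangular t) (i : Fin 3) : 0 ≤ t i := by
  simpa using ht (i + 1) (i + 1) i (by simp)

lemma vecMul_A (ht : IsTriangular t) (a : Fin 3) : IsTriangular (t ᵥ* A a) := by
  intro i j k hjk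
  have h_nonneg := ht.nonneg
  have h_ijk := ht i j k hjk
  simp only [vecMul_A_apply]
  grind

lemma vecMul_Aw (ht : IsTriangular t) (w : List (Fin 3)) : IsTriangular (t ᵥ* Aw w) := by
  induction w generalizing t with
  | nil => simpa [Aw] using ht
  | cons a w ih => simpa [Aw] using ih (ht.vecMul_A a)

lemma add_le_vecMul_A_vecMul_A (ht : IsTriangular t) {a b : Fin 3} (hab : a ≠ b) (j : Fin 3) :
    t a + t b ≤ (t ᵥ* A a ᵥ* A b) j := by
  have h_nonneg := ht.nonneg
  grind [vecMul_A_apply]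

lemma vecMul_A_vecMul_A_le (ht : IsTriangular t) {a b : Fin 3} (hab : a ≠ b) (i : Fin 3) :
    (t ᵥ* A a ᵥ* A b) i ≤ 3 * (t a + t b) := by
  have h_nonneg := ht.nonneg
  have h_iab := ht i a b hab
  grind [vecMul_A_apply]

end IsTriangular

lemma isTriangular_one : IsTriangular 1 := fun _ _ _ _ ↦ by norm_num

lemma sval1_Aw_le {w : List (Fin 3)} (hw : LastTwoDiff w) (j : Fin 3) :
    sval1 (Aw w) ≤ 9 * (1 ᵥ* Aw w) j := by
  obtain ⟨u, a, b, rfl, hab⟩ := hw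
  have ht := isTriangular_one.vecMul_Aw u
  set t := 1 ᵥ* Aw u with ht_def
  have hcols : 1 ᵥ* Aw (u ++ [a, b]) = t ᵥ* A a ᵥ* A b := by
    simp [ht_def, Aw, Matrix.mul_assoc]
  calc sval1 (Aw (u ++ [a, b]))
    _ ≤ ∑ i, (1 ᵥ* Aw (u ++ [a, b])) i := sval1_le_sum_vecMul (Aw_nonneg _)
    _ ≤ ∑ _i : Fin 3, 3 * (t a + t b) := by
        rw [hcols]
        gcongr with i
        exact ht.vecMul_A_vecMul_A_le hab i
    _ = 9 * (t a + t b) := by simp only [Fin.sum_univ_three]; ring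
    _ ≤ 9 * (1 ᵥ* Aw (u ++ [a, b])) j := by
        rw [hcols]
        gcongr
        exact ht.add_le_vecMul_A_vecMul_A hab j

lemma prod_inv_le_div_pow_card {ι : Type*} [Fintype ι] {σ K : ℝ} {t : ι → ℝ} (hσ : 0 < σ)
    (ht : ∀ j, 0 < t j) (hσt : ∀ j, σ ≤ K * t j) :
    ∏ j, (t j)⁻¹ ≤ (K / σ) ^ Fintype.card ι := by
  calc ∏ j, (t j)⁻¹ ≤ ∏ _j : ι, K / σ := by
        gcongr with j
        · exact fun j _ ↦ (inv_pos.2 (ht j)).le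
        · rw [inv_le_iff_one_le_mul₀ (ht j), div_mul_eq_mul_div, one_le_div hσ]
          exact hσt j
    _ = (K / σ) ^ Fintype.card ι := Finset.prod_const _

lemma normalized_images_eq_range_normalized_cols (M : M3) :
    ({toE ((omega3 (M *ᵥ basis3 0))⁻¹ • (M *ᵥ basis3 0)),
      toE ((omega3 (M *ᵥ basis3 1))⁻¹ • (M *ᵥ basis3 1)),
      toE ((omega3 (M *ᵥ basis3 2))⁻¹ • (M *ᵥ basis3 2))} : Set E3) =
      Set.range fun j ↦ WithLp.toLp 2 (((1 ᵥ* M) j)⁻¹ • M.col j) := by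
  have homega (j : Fin 3) : omega3 (M.col j) = (1 ᵥ* M) j := by
    simp [omega3, vecMul, dotProduct, Fin.sum_univ_three]
  ext x
  simp [Fin.exists_fin_succ, basis3, toE, homega, eq_comm]

/-- Area bound on image triangles: if the last two letters of `w` differ, the area of the
triangle with vertices `A_w e_i / ω(A_w e_i)` is at most `C σ₁(A_w)⁻³`. -/
theorem area_image_triangle_le :
    ∃ C > (0:ℝ), ∀ w : List (Fin 3), LastTwoDiff w →
      μH[2] (convexHull ℝ
          {toE ((omega3 (Aw w *ᵥ basis3 0))⁻¹ • (Aw w *ᵥ basis3 0)),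
           toE ((omega3 (Aw w *ᵥ basis3 1))⁻¹ • (Aw w *ᵥ basis3 1)),
           toE ((omega3 (Aw w *ᵥ basis3 2))⁻¹ • (Aw w *ᵥ basis3 2))}) ≤
        ENNReal.ofReal (C / sval1 (Aw w) ^ 3) := by
  obtain ⟨K, hK, -⟩ := ENNReal.lt_iff_exists_nnreal_btwn.1
    (hausdorffMeasure_euclideanStdSimplex_lt_top (ι := Fin 3))
  have hrank : Module.finrank ℝ (sumZeroSubspace (Fin 3)) = 2 :=
    Nat.succ_injective (finrank_sumZeroSubspace_add_one (Fin 3))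
  have hK_pos : (0 : ℝ) < K := ENNReal.coe_pos.1 (pos_of_gt hK)
  refine ⟨9 ^ 3 * K, by positivity, fun w hw ↦ ?_⟩
  have hσ : 0 < sval1 (Aw w) := sval1_pos fun h ↦ by simpa [h] using det_Aw w
  have hcol (j : Fin 3) : 0 < (1 ᵥ* Aw w) j := by linarith [sval1_Aw_le hw j]
  have harea := hausdorffMeasure_convexHull_normalized_cols fun j ↦ (hcol j).ne'
  rw [det_Aw, one_mul, abs_of_pos (Finset.prod_pos fun j _ ↦ inv_pos.2 (hcol j)), hrank] at harea
  rw [hrank] at hK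
  rw [normalized_images_eq_range_normalized_cols]
  calc _ = _ := harea
    _ ≤ ENNReal.ofReal ((9 / sval1 (Aw w)) ^ 3) * K := by
        gcongr
        exact prod_inv_le_div_pow_card hσ hcol (sval1_Aw_le hw)
    _ = ENNReal.ofReal (9 ^ 3 * K / sval1 (Aw w) ^ 3) := by
        rw [← ENNReal.ofReal_coe_nnreal, ← ENNReal.ofReal_mul (by positivity)]
        congr 1
        ring
end

section
/- There exists ε > 0 such that for every word w with letters in {1,2} (only the letters 1 and 2 are used) whose last two letters are different, one has both σ2(A_w) ≥ ε and ‖A_w e_1‖ · ‖A_w e_2‖ ≥ ε · σ1(A_w)²; equivalently, since ‖A_w e_1 ∧ A_w e_2‖ = 1, the projective length of the arc A_w I satisfies ε·|A_w I| ≤ σ1(A_w)^{−2}, where I is the projective segment between E_1 = ℝe_1 and E_2 = ℝe_2. -/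
open Matrix MeasureTheory

/-! In the basis `e₁, e₂, e₁ + e₂ - e₃` both generators are block diagonal: for a word `w` in the
letters `1, 2` the matrix `A_w` fixes `e₁ + e₂ - e₃` and acts on `span(e₁, e₂)` by a matrix
`B = (a b; c d)` with non-negative entries and determinant one. Let `N` be the sum of the squares
of its entries. The third column of `A_w` is `(a + b - 1, c + d - 1, 1)`, and `a + d ≥ 2`, so
`σ₁(A_w)² ≤ 3 N`. The inverse has the block `B⁻¹`, whose entries are those of `B` up to sign and
order, so `N ≤ 2 σ₁(A_w⁻¹)²`, and `σ₂(A_w) = σ₁(A_w⁻¹) / σ₁(A_w)` is bounded below.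

If the last two letters differ, then `(A_w e₁, A_w e₂)` is `(2x + y, x + y)` or `(x + y, x + 2y)`
with `x, y` non-negative. The two norms are then within a factor two of each other, hence their
product is comparable to the sum `N` of their squares. -/

section OperatorNorm

open scoped Matrix.Norms.L2Operator

variable {m n 𝕜 : Type*} [Fintype m] [Fintype n] [DecidableEq n] [RCLike 𝕜]

lemma l2_opNorm_sq_le_sum_sq (g : Matrix m n 𝕜) : ‖g‖ ^ 2 ≤ ∑ i, ∑ j, ‖g i j‖ ^ 2 := by
  have hF : 0 ≤ ∑ i, ∑ j, ‖g i j‖ ^ 2 := by positivity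
  suffices h : ‖g‖ ≤ √(∑ i, ∑ j, ‖g i j‖ ^ 2) from (Real.le_sqrt (norm_nonneg g) hF).1 h
  refine ContinuousLinearMap.opNorm_le_bound _ (Real.sqrt_nonneg _) fun x => ?_
  rw [EuclideanSpace.norm_eq, EuclideanSpace.norm_eq, ← Real.sqrt_mul hF, Finset.sum_mul]
  refine Real.sqrt_le_sqrt (Finset.sum_le_sum fun i _ => ?_)
  calc ‖∑ j, g i j * x j‖ ^ 2 ≤ (∑ j, ‖g i j‖ * ‖x j‖) ^ 2 := by
        gcongr
        exact norm_sum_le_of_le _ fun j _ => norm_mul_le _ _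
    _ ≤ (∑ j, ‖g i j‖ ^ 2) * ∑ j, ‖x j‖ ^ 2 := Finset.sum_mul_sq_le_sq_mul_sq ..

lemma sum_sq_col_le_l2_opNorm_sq (g : Matrix m n 𝕜) (j : n) : ∑ i, ‖g i j‖ ^ 2 ≤ ‖g‖ ^ 2 := by
  have h := g.l2_opNorm_mulVec (EuclideanSpace.single j 1)
  rw [PiLp.norm_single, norm_one, mul_one] at h
  calc ∑ i, ‖g i j‖ ^ 2
      = ‖(EuclideanSpace.equiv m 𝕜).symm (g *ᵥ EuclideanSpace.single j (1 : 𝕜))‖ ^ 2 := by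
        simp [EuclideanSpace.norm_sq_eq]
    _ ≤ ‖g‖ ^ 2 := by gcongr

lemma sval1_eq_l2_opNorm (g : M3) : sval1 g = ‖g‖ := rfl

lemma sval1_nonneg (g : M3) : 0 ≤ sval1 g := norm_nonneg g

lemma sval1_pos_s10 {g : M3} (hg : g ≠ 0) : 0 < sval1 g := by
  rw [sval1_eq_l2_opNorm]
  exact norm_pos_iff.2 hg

lemma sval1_sq_le_sum_sq (g : M3) : sval1 g ^ 2 ≤ ∑ i, ∑ j, g i j ^ 2 := by
  simpa [sval1_eq_l2_opNorm] using l2_opNorm_sq_le_sum_sq g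

lemma sum_sq_col_le_sval1_sq (g : M3) (j : Fin 3) : ∑ i, g i j ^ 2 ≤ sval1 g ^ 2 := by
  simpa [sval1_eq_l2_opNorm] using sum_sq_col_le_l2_opNorm_sq g j

end OperatorNorm

lemma enorm3_sq (v : Fin 3 → ℝ) : enorm3 v ^ 2 = ∑ i, v i ^ 2 := by
  rw [enorm3, Real.sq_sqrt (by positivity), Fin.sum_univ_three]

lemma enorm3_le_mul {u v : Fin 3 → ℝ} {c : ℝ} (hc : 0 ≤ c) (hu : ∀ i, 0 ≤ u i)
    (huv : ∀ i, u i ≤ c * v i) : enorm3 u ≤ c * enorm3 v := by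
  have hsq (i : Fin 3) : u i ^ 2 ≤ c ^ 2 * v i ^ 2 := by
    simpa only [mul_pow] using pow_le_pow_left₀ (hu i) (huv i) 2
  calc enorm3 u ≤ √(c ^ 2 * (v 0 ^ 2 + v 1 ^ 2 + v 2 ^ 2)) :=
        Real.sqrt_le_sqrt (by linarith [hsq 0, hsq 1, hsq 2])
    _ = c * enorm3 v := by rw [Real.sqrt_mul (sq_nonneg c), Real.sqrt_sq hc, enorm3]

lemma mul_apply_le_mul_mul_apply {l m n R : Type*} [Fintype m] [CommSemiring R] [PartialOrder R]
    [IsOrderedRing R] {B : Matrix l m R} {D : Matrix m n R} {c : R} {j k : n}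
    (hB : ∀ i p, 0 ≤ B i p) (hD : ∀ p, D p j ≤ c * D p k) (i : l) :
    (B * D) i j ≤ c * (B * D) i k := by
  rw [mul_apply, mul_apply, Finset.mul_sum]
  refine Finset.sum_le_sum fun p _ => ?_
  rw [mul_left_comm]
  exact mul_le_mul_of_nonneg_left (hD p) (hB i p)

lemma mul_sq_add_sq_le_mul_mul {R : Type*} [CommRing R] [PartialOrder R] [IsOrderedRing R]
    {c s t : R} (hst : s ≤ c * t) (hts : t ≤ c * s) :
    c * (s ^ 2 + t ^ 2) ≤ (1 + c ^ 2) * (s * t) := by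
  have h := mul_nonneg (sub_nonneg.2 hst) (sub_nonneg.2 hts)
  rw [← sub_nonneg]
  calc 0 ≤ (c * t - s) * (c * s - t) := h
    _ = (1 + c ^ 2) * (s * t) - c * (s ^ 2 + t ^ 2) := by ring

lemma sum_sq_inv_of_det_eq_one {R : Type*} [CommRing R] {B : Matrix (Fin 2) (Fin 2) R}
    (hB : B.det = 1) :
    ∑ i, ∑ j, B⁻¹ i j ^ 2 = ∑ i, ∑ j, B i j ^ 2 := by
  rw [inv_def, hB, Ring.inverse_one, one_smul, adjugate_fin_two]
  simp only [Fin.sum_univ_two, of_apply, cons_val]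
  ring

/-- The monoid of matrices with non-negative entries and determinant one. For words in the letters
`1, 2` the blocks of `A_w` on `span(e₁, e₂)` belong to it. -/
def nonnegUnimodular (n R : Type*) [Fintype n] [DecidableEq n] [CommRing R] [PartialOrder R]
    [IsOrderedRing R] : Submonoid (Matrix n n R) where
  carrier := {B | (∀ i j, 0 ≤ B i j) ∧ B.det = 1}
  mul_mem' {B C} hB hC :=
    ⟨fun i j => Finset.sum_nonneg fun k _ => mul_nonneg (hB.1 i k) (hC.1 k j),
      by rw [det_mul, hB.2, hC.2, one_mul]⟩
  one_mem' := ⟨fun _ _ => zero_le_one_elem _ _, det_one⟩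

lemma upper_unipotent_mem_nonnegUnimodular {R : Type*} [CommRing R] [PartialOrder R]
    [IsOrderedRing R] : !![1, 1; 0, 1] ∈ nonnegUnimodular (Fin 2) R :=
  ⟨by simp [Fin.forall_fin_two], by simp⟩

lemma lower_unipotent_mem_nonnegUnimodular {R : Type*} [CommRing R] [PartialOrder R]
    [IsOrderedRing R] : !![1, 0; 1, 1] ∈ nonnegUnimodular (Fin 2) R :=
  ⟨by simp [Fin.forall_fin_two], by simp⟩

lemma two_le_trace_of_mem_nonnegUnimodular {R : Type*} [CommRing R] [LinearOrder R]
    [IsStrictOrderedRing R] {B : Matrix (Fin 2) (Fin 2) R} (hB : B ∈ nonnegUnimodular (Fin 2) R) :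
    2 ≤ B.trace := by
  obtain ⟨hnonneg, hdet⟩ := hB
  rw [det_fin_two] at hdet
  rw [trace_fin_two]
  refine le_of_sq_le_sq ?_ (add_nonneg (hnonneg 0 0) (hnonneg 1 1))
  nlinarith [sq_nonneg (B 0 0 - B 1 1), mul_nonneg (hnonneg 0 1) (hnonneg 1 0)]

section BlockExtension

variable {R : Type*} [CommRing R]

/-- The endomorphism of `R³` that acts by `B` on `span(e₁, e₂)` and fixes `e₁ + e₂ - e₃`.
It carries the blocks of the first two Rauzy generators to the generators themselves. -/
def blockExtension : Matrix (Fin 2) (Fin 2) R →* Matrix (Fin 3) (Fin 3) R where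
  toFun B := !![B 0 0, B 0 1, B 0 0 + B 0 1 - 1; B 1 0, B 1 1, B 1 0 + B 1 1 - 1; 0, 0, 1]
  map_one' := by ext i j; fin_cases i <;> fin_cases j <;> simp
  map_mul' B C := by
    ext i j
    fin_cases i <;> fin_cases j <;> simp [mul_apply, Fin.sum_univ_succ] <;> ring

lemma blockExtension_apply (B : Matrix (Fin 2) (Fin 2) R) :
    blockExtension B =
      !![B 0 0, B 0 1, B 0 0 + B 0 1 - 1; B 1 0, B 1 1, B 1 0 + B 1 1 - 1; 0, 0, 1] :=
  rfl

lemma det_blockExtension (B : Matrix (Fin 2) (Fin 2) R) : (blockExtension B).det = B.det := by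
  simp [blockExtension_apply, det_fin_three, det_fin_two]

lemma inv_blockExtension {B : Matrix (Fin 2) (Fin 2) R} (hB : IsUnit B.det) :
    (blockExtension B)⁻¹ = blockExtension B⁻¹ :=
  inv_eq_right_inv (by rw [← map_mul, mul_nonsing_inv B hB, map_one])

lemma blockExtension_ne_zero [Nontrivial R] (B : Matrix (Fin 2) (Fin 2) R) :
    blockExtension B ≠ 0 :=
  fun h => one_ne_zero (congrFun₂ h 2 2)

lemma A_zero_eq_blockExtension : A 0 = blockExtension !![1, 1; 0, 1] := by
  simp [A, blockExtension_apply]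

lemma A_one_eq_blockExtension : A 1 = blockExtension !![1, 0; 1, 1] := by
  simp [A, blockExtension_apply]

variable {B : Matrix (Fin 2) (Fin 2) ℝ}

lemma blockExtension_mulVec_basis3_zero (B : Matrix (Fin 2) (Fin 2) ℝ) :
    blockExtension B *ᵥ basis3 0 = ![B 0 0, B 1 0, 0] := by
  rw [basis3, mulVec_single_one]
  ext i
  fin_cases i <;> rfl

lemma blockExtension_mulVec_basis3_one (B : Matrix (Fin 2) (Fin 2) ℝ) :
    blockExtension B *ᵥ basis3 1 = ![B 0 1, B 1 1, 0] := by
  rw [basis3, mulVec_single_one]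
  ext i
  fin_cases i <;> rfl

lemma sum_sq_le_two_mul_sval1_blockExtension_sq (B : Matrix (Fin 2) (Fin 2) ℝ) :
    ∑ i, ∑ j, B i j ^ 2 ≤ 2 * sval1 (blockExtension B) ^ 2 := by
  calc ∑ i, ∑ j, B i j ^ 2
      = ∑ i, blockExtension B i 0 ^ 2 + ∑ i, blockExtension B i 1 ^ 2 := by
        simp only [blockExtension_apply, Fin.sum_univ_two, Fin.sum_univ_three, of_apply, cons_val]
        ring
    _ ≤ sval1 (blockExtension B) ^ 2 + sval1 (blockExtension B) ^ 2 :=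
        add_le_add (sum_sq_col_le_sval1_sq _ 0) (sum_sq_col_le_sval1_sq _ 1)
    _ = 2 * sval1 (blockExtension B) ^ 2 := (two_mul _).symm

lemma sum_sq_blockExtension (B : Matrix (Fin 2) (Fin 2) R) :
    ∑ i, ∑ j, blockExtension B i j ^ 2 =
      ∑ i, ∑ j, B i j ^ 2 + ((B 0 0 + B 0 1 - 1) ^ 2 + (B 1 0 + B 1 1 - 1) ^ 2 + 1) := by
  simp only [blockExtension_apply, Fin.sum_univ_two, Fin.sum_univ_three, of_apply, cons_val]
  ring

lemma sval1_blockExtension_sq_le (hB : B ∈ nonnegUnimodular (Fin 2) ℝ) :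
    sval1 (blockExtension B) ^ 2 ≤ 3 * ∑ i, ∑ j, B i j ^ 2 := by
  have htrace : 2 ≤ B 0 0 + B 1 1 :=
    trace_fin_two B ▸ two_le_trace_of_mem_nonnegUnimodular hB
  have hcol : (B 0 0 + B 0 1 - 1) ^ 2 + (B 1 0 + B 1 1 - 1) ^ 2 + 1 ≤
      2 * ∑ i, ∑ j, B i j ^ 2 := by
    simp only [Fin.sum_univ_two]
    linarith [sq_nonneg (B 0 0 - B 0 1), sq_nonneg (B 1 0 - B 1 1), hB.1 0 1, hB.1 1 0]
  linarith [sval1_sq_le_sum_sq (blockExtension B), sum_sq_blockExtension B]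

lemma one_third_le_sval2_blockExtension (hB : B ∈ nonnegUnimodular (Fin 2) ℝ) :
    1 / 3 ≤ sval2 (blockExtension B) := by
  have hpos : 0 < sval1 (blockExtension B) := sval1_pos_s10 (blockExtension_ne_zero B)
  have hle : sval1 (blockExtension B) ≤ 3 * sval1 (blockExtension B⁻¹) := by
    refine le_of_sq_le_sq ?_ (mul_nonneg (by norm_num) (sval1_nonneg _))
    calc sval1 (blockExtension B) ^ 2 ≤ 3 * ∑ i, ∑ j, B i j ^ 2 := sval1_blockExtension_sq_le hB
      _ = 3 * ∑ i, ∑ j, B⁻¹ i j ^ 2 := by rw [sum_sq_inv_of_det_eq_one hB.2]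
      _ ≤ 3 * (2 * sval1 (blockExtension B⁻¹) ^ 2) := by
        gcongr
        exact sum_sq_le_two_mul_sval1_blockExtension_sq B⁻¹
      _ ≤ (3 * sval1 (blockExtension B⁻¹)) ^ 2 := by
        linarith [sq_nonneg (sval1 (blockExtension B⁻¹))]
  rw [sval2, det_blockExtension, inv_blockExtension (by simp [hB.2]), hB.2, abs_one, one_mul,
    le_div_iff₀ hpos]
  linarith

lemma mul_sval1_blockExtension_sq_le (hB : B ∈ nonnegUnimodular (Fin 2) ℝ) {c : ℝ} (hc : 0 ≤ c)
    (h₀₁ : ∀ i, B i 0 ≤ c * B i 1) (h₁₀ : ∀ i, B i 1 ≤ c * B i 0) :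
    c * sval1 (blockExtension B) ^ 2 ≤ 3 * (1 + c ^ 2) *
      (enorm3 (blockExtension B *ᵥ basis3 0) * enorm3 (blockExtension B *ᵥ basis3 1)) := by
  rw [blockExtension_mulVec_basis3_zero, blockExtension_mulVec_basis3_one]
  set s := enorm3 ![B 0 0, B 1 0, 0] with hs
  set t := enorm3 ![B 0 1, B 1 1, 0] with ht
  have hst : s ≤ c * t :=
    enorm3_le_mul hc (by simp [Fin.forall_fin_succ, hB.1]) (by simp [Fin.forall_fin_succ, h₀₁])
  have hts : t ≤ c * s :=
    enorm3_le_mul hc (by simp [Fin.forall_fin_succ, hB.1]) (by simp [Fin.forall_fin_succ, h₁₀])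
  have hsum : s ^ 2 + t ^ 2 = ∑ i, ∑ j, B i j ^ 2 := by
    simp only [hs, ht, enorm3_sq, Fin.sum_univ_two, Fin.sum_univ_three, cons_val]
    ring
  calc c * sval1 (blockExtension B) ^ 2 ≤ c * (3 * ∑ i, ∑ j, B i j ^ 2) := by
        gcongr
        exact sval1_blockExtension_sq_le hB
    _ = 3 * (c * (s ^ 2 + t ^ 2)) := by rw [hsum, mul_left_comm]
    _ ≤ 3 * ((1 + c ^ 2) * (s * t)) :=
        mul_le_mul_of_nonneg_left (mul_sq_add_sq_le_mul_mul hst hts) zero_le_three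
    _ = 3 * (1 + c ^ 2) * (s * t) := (mul_assoc _ _ _).symm

end BlockExtension

section Words

variable {w : List (Fin 3)}

lemma Aw_mem_map_blockExtension (hw : ∀ i ∈ w, i ≠ 2) :
    Aw w ∈ (nonnegUnimodular (Fin 2) ℝ).map blockExtension := by
  refine Submonoid.list_prod_mem _ fun g hg => ?_
  obtain ⟨i, hi, rfl⟩ := List.mem_map.1 hg
  obtain rfl | rfl : i = 0 ∨ i = 1 := by have := hw i hi; omega
  · exact ⟨_, upper_unipotent_mem_nonnegUnimodular, A_zero_eq_blockExtension.symm⟩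
  · exact ⟨_, lower_unipotent_mem_nonnegUnimodular, A_one_eq_blockExtension.symm⟩

lemma exists_blockExtension_eq_A_mul_A {x y : Fin 3} (hx : x ≠ 2) (hy : y ≠ 2) (hxy : x ≠ y) :
    ∃ D ∈ nonnegUnimodular (Fin 2) ℝ,
      (∀ i, D i 0 ≤ 2 * D i 1) ∧ (∀ i, D i 1 ≤ 2 * D i 0) ∧ blockExtension D = A x * A y := by
  have hU := upper_unipotent_mem_nonnegUnimodular (R := ℝ)
  have hL := lower_unipotent_mem_nonnegUnimodular (R := ℝ)
  obtain ⟨rfl, rfl⟩ | ⟨rfl, rfl⟩ : (x = 0 ∧ y = 1) ∨ (x = 1 ∧ y = 0) := by omega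
  · refine ⟨_, mul_mem hU hL, by norm_num [Fin.forall_fin_two],
      by norm_num [Fin.forall_fin_two], ?_⟩
    rw [map_mul, A_zero_eq_blockExtension, A_one_eq_blockExtension]
  · refine ⟨_, mul_mem hL hU, by norm_num [Fin.forall_fin_two],
      by norm_num [Fin.forall_fin_two], ?_⟩
    rw [map_mul, A_zero_eq_blockExtension, A_one_eq_blockExtension]

lemma exists_blockExtension_eq_Aw_of_lastTwoDiff (hw : ∀ i ∈ w, i ≠ 2) (hlast : LastTwoDiff w) :
    ∃ B ∈ nonnegUnimodular (Fin 2) ℝ,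
      (∀ i, B i 0 ≤ 2 * B i 1) ∧ (∀ i, B i 1 ≤ 2 * B i 0) ∧ blockExtension B = Aw w := by
  obtain ⟨u, x, y, rfl, hxy⟩ := hlast
  obtain ⟨C, hC, hCu⟩ := Aw_mem_map_blockExtension (w := u) fun i hi => hw i (by simp [hi])
  obtain ⟨D, hD, h₀₁, h₁₀, hDxy⟩ :=
    exists_blockExtension_eq_A_mul_A (hw x (by simp)) (hw y (by simp)) hxy
  refine ⟨C * D, mul_mem hC hD, mul_apply_le_mul_mul_apply hC.1 h₀₁,
    mul_apply_le_mul_mul_apply hC.1 h₁₀, ?_⟩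
  rw [map_mul, hCu, hDxy]
  simp [Aw]

lemma one_third_le_sval2_Aw (hw : ∀ i ∈ w, i ≠ 2) : 1 / 3 ≤ sval2 (Aw w) := by
  obtain ⟨B, hB, hBw⟩ := Aw_mem_map_blockExtension hw
  exact hBw ▸ one_third_le_sval2_blockExtension hB

lemma two_fifteenths_mul_sval1_Aw_sq_le (hw : ∀ i ∈ w, i ≠ 2) (hlast : LastTwoDiff w) :
    2 / 15 * sval1 (Aw w) ^ 2 ≤ enorm3 (Aw w *ᵥ basis3 0) * enorm3 (Aw w *ᵥ basis3 1) := by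
  obtain ⟨B, hB, h₀₁, h₁₀, hBw⟩ := exists_blockExtension_eq_Aw_of_lastTwoDiff hw hlast
  rw [← hBw]
  linarith [mul_sval1_blockExtension_sq_le hB two_pos.le h₀₁ h₁₀]

end Words

/-- For words in the letters `1,2` only (indices `0,1`) whose last two letters differ:
`σ₂(A_w) ≥ ε` and `‖A_w e₁‖·‖A_w e₂‖ ≥ ε σ₁(A_w)²`. -/
theorem two_letter_words_bounds :
    ∃ ε > (0:ℝ), ∀ w : List (Fin 3), (∀ i ∈ w, i ≠ 2) → LastTwoDiff w →
      ε ≤ sval2 (Aw w) ∧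
      ε * sval1 (Aw w) ^ 2 ≤ enorm3 (Aw w *ᵥ basis3 0) * enorm3 (Aw w *ᵥ basis3 1) := by
  refine ⟨2 / 15, by norm_num, fun w hw hlast => ⟨?_, two_fifteenths_mul_sval1_Aw_sq_le hw hlast⟩⟩
  calc (2 / 15 : ℝ) ≤ 1 / 3 := by norm_num
    _ ≤ sval2 (Aw w) := one_third_le_sval2_Aw hw
end
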